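/- Let d, c_i ∈ (0,1) with ∑ c_i > 1, and let x* ∈ (0,1) be the unique solution of 1 − x = ∏_{i∈d}(1 − c_i x). Then x* is a continuously differentiable function of c = (c_i) on the open set C = { c : c_i ∈ (0,1), ∑ c_i > 1 }. -/

import Mathlib

lemma aux_prod_pos {ι : Type*} (s : Finset ι) (y : ι → ℝ)
    (hy : ∀ i ∈ s, y i ∈ Set.Ioo (0 : ℝ) 1) : 0 < ∏ i ∈ s, (1 - y i) :=
  Finset.prod_pos fun i hi => by linarith [(hy i hi).2]

lemma aux_prod_lt_one {ι : Type*} (s : Finset ι) (y : ι → ℝ)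
    (hy : ∀ i ∈ s, y i ∈ Set.Ioo (0 : ℝ) 1) (hs : s.Nonempty) : ∏ i ∈ s, (1 - y i) < 1 := by
  classical
  obtain ⟨a, ha⟩ := hs
  rw [← Finset.mul_prod_erase s _ ha]
  have h1 : ∏ i ∈ s.erase a, (1 - y i) ≤ 1 :=
    Finset.prod_le_one (fun i hi => by linarith [(hy i (Finset.mem_of_mem_erase hi)).2])
      (fun i hi => by linarith [(hy i (Finset.mem_of_mem_erase hi)).1])
  have h2 := aux_prod_pos (s.erase a) y fun i hi => hy i (Finset.mem_of_mem_erase hi)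
  nlinarith [(hy a ha).1, (hy a ha).2]

/-- weak convexity -/
lemma aux_conv {ι : Type*} (s : Finset ι) (y : ι → ℝ)
    (hy : ∀ i ∈ s, y i ∈ Set.Ioo (0 : ℝ) 1) (t : ℝ) (h0 : 0 < t) (h1 : t < 1) :
    ∏ i ∈ s, (1 - t * y i) ≤ 1 - t + t * ∏ i ∈ s, (1 - y i) := by
  classical
  induction s using Finset.induction_on with
  | empty => simp
  | insert a s ha ih =>
    have hs : ∀ i ∈ s, y i ∈ Set.Ioo (0 : ℝ) 1 := fun i hi => hy i (Finset.mem_insert_of_mem hi)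
    have ih := ih hs
    have hya := hy a (Finset.mem_insert_self a s)
    rw [Finset.prod_insert ha, Finset.prod_insert ha]
    have hP1 : ∏ i ∈ s, (1 - y i) ≤ 1 := 
      Finset.prod_le_one (fun i hi => by linarith [(hs i hi).2])
        (fun i hi => by linarith [(hs i hi).1])
    have hk : 0 ≤ 1 - t * y a := by nlinarith [hya.1, hya.2]
    have := mul_le_mul_of_nonneg_left ih hk
    have h3 : 0 ≤ t * (1 - t) * y a * (1 - ∏ i ∈ s, (1 - y i)) :=
      mul_nonneg (mul_nonneg (mul_nonneg h0.le (by linarith)) hya.1.le) (by linarith)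
    nlinarith

lemma aux_conv_strict {ι : Type*} [DecidableEq ι] (d : Finset ι) (y : ι → ℝ)
    (hy : ∀ i ∈ d, y i ∈ Set.Ioo (0 : ℝ) 1) (a : ι) (ha : a ∈ d) (hne : (d.erase a).Nonempty)
    (t : ℝ) (h0 : 0 < t) (h1 : t < 1) :
    ∏ i ∈ d, (1 - t * y i) < 1 - t + t * ∏ i ∈ d, (1 - y i) := by
  have hs : ∀ i ∈ d.erase a, y i ∈ Set.Ioo (0 : ℝ) 1 :=
    fun i hi => hy i (Finset.mem_of_mem_erase hi)
  have ih := aux_conv _ y hs t h0 h1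
  have hP := aux_prod_lt_one _ y hs hne
  have hya := hy a ha
  rw [← Finset.mul_prod_erase d _ ha, ← Finset.mul_prod_erase d (fun i => 1 - y i) ha]
  have hk : 0 ≤ 1 - t * y a := by nlinarith [hya.1, hya.2]
  have := mul_le_mul_of_nonneg_left ih hk
  have h3 : 0 < t * (1 - t) * y a * (1 - ∏ i ∈ d.erase a, (1 - y i)) :=
    mul_pos (mul_pos (mul_pos h0 (by linarith)) hya.1) (by linarith)
  nlinarith

/-- `P (1 + ∑ y/(1-y)) ≤ 1` -/
lemma aux_bern {ι : Type*} (s : Finset ι) (y : ι → ℝ)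
    (hy : ∀ i ∈ s, y i ∈ Set.Ioo (0 : ℝ) 1) :
    (∏ i ∈ s, (1 - y i)) * (1 + ∑ i ∈ s, y i / (1 - y i)) ≤ 1 := by
  classical
  induction s using Finset.induction_on with
  | empty => simp
  | insert a s ha ih =>
    have hs : ∀ i ∈ s, y i ∈ Set.Ioo (0 : ℝ) 1 := fun i hi => hy i (Finset.mem_insert_of_mem hi)
    have ih := ih hs
    have hya := hy a (Finset.mem_insert_self a s)
    rw [Finset.prod_insert ha, Finset.sum_insert ha]
    have hP1 : ∏ i ∈ s, (1 - y i) ≤ 1 := 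
      Finset.prod_le_one (fun i hi => by linarith [(hs i hi).2])
        (fun i hi => by linarith [(hs i hi).1])
    have e : (1 - y a) * (y a / (1 - y a)) = y a :=
      mul_div_cancel₀ _ (by linarith [hya.2])
    have := mul_le_mul_of_nonneg_left ih (by linarith [hya.2] : 0 ≤ 1 - y a)
    have := mul_le_mul_of_nonneg_left hP1 hya.1.le
    calc _ = (1 - y a) * ((∏ i ∈ s, (1 - y i)) * (1 + ∑ i ∈ s, y i / (1 - y i)))
          + (∏ i ∈ s, (1 - y i)) * ((1 - y a) * (y a / (1 - y a))) := by ring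
      _ ≤ 1 := by rw [e]; linarith

lemma aux_bern_strict {ι : Type*} [DecidableEq ι] (d : Finset ι) (y : ι → ℝ)
    (hy : ∀ i ∈ d, y i ∈ Set.Ioo (0 : ℝ) 1) (a : ι) (ha : a ∈ d) (hne : (d.erase a).Nonempty) :
    (∏ i ∈ d, (1 - y i)) * (1 + ∑ i ∈ d, y i / (1 - y i)) < 1 := by
  have hs : ∀ i ∈ d.erase a, y i ∈ Set.Ioo (0 : ℝ) 1 :=
    fun i hi => hy i (Finset.mem_of_mem_erase hi)
  have ih := aux_bern _ y hs
  have hP := aux_prod_lt_one _ y hs hne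
  have hya := hy a ha
  rw [← Finset.mul_prod_erase d _ ha, ← Finset.add_sum_erase d _ ha]
  have e : (1 - y a) * (y a / (1 - y a)) = y a :=
    mul_div_cancel₀ _ (by linarith [hya.2])
  have := mul_le_mul_of_nonneg_left ih (by linarith [hya.2] : 0 ≤ 1 - y a)
  have := mul_lt_mul_of_pos_left hP hya.1
  calc _ = (1 - y a) * ((∏ i ∈ d.erase a, (1 - y i)) * (1 + ∑ i ∈ d.erase a, y i / (1 - y i)))
        + (∏ i ∈ d.erase a, (1 - y i)) * ((1 - y a) * (y a / (1 - y a))) := by ring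
    _ < 1 := by rw [e]; linarith

lemma aux_prod_sum {ι : Type*} (s : Finset ι) (y : ι → ℝ)
    (hy : ∀ i ∈ s, y i ∈ Set.Ioo (0 : ℝ) 1) :
    (∏ i ∈ s, (1 - y i)) * (1 + ∑ i ∈ s, y i) ≤ 1 := by
  refine le_trans ?_ (aux_bern s y hy)
  refine mul_le_mul_of_nonneg_left ?_ (aux_prod_pos s y hy).le
  gcongr with i hi
  have := hy i hi
  rw [le_div_iff₀ (by linarith [this.2])]
  nlinarith [this.1]

lemma aux_two {ι : Type*} [DecidableEq ι] (d : Finset ι) (c : ι → ℝ)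
    (hc : ∀ i ∈ d, c i ∈ Set.Ioo (0 : ℝ) 1) (hS : 1 < ∑ i ∈ d, c i) :
    ∃ a ∈ d, (d.erase a).Nonempty := by
  have hd : d.Nonempty := by
    rw [Finset.nonempty_iff_ne_empty]; rintro rfl; simp at hS; linarith
  obtain ⟨a, ha⟩ := hd
  refine ⟨a, ha, ?_⟩
  rw [Finset.nonempty_iff_ne_empty]
  intro h
  rw [← Finset.add_sum_erase d _ ha, h] at hS
  simp at hS
  linarith [(hc a ha).2]

lemma aux_scale {ι : Type*} (d : Finset ι) (c : ι → ℝ)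
    (hc : ∀ i ∈ d, c i ∈ Set.Ioo (0 : ℝ) 1) (x : ℝ) (hx : x ∈ Set.Ioo (0 : ℝ) 1) :
    ∀ i ∈ d, c i * x ∈ Set.Ioo (0 : ℝ) 1 := fun i hi =>
  ⟨mul_pos (hc i hi).1 hx.1, by nlinarith [(hc i hi).1, (hc i hi).2, hx.1, hx.2]⟩

lemma aux_not_lt {ι : Type*} [DecidableEq ι] (d : Finset ι) (c : ι → ℝ)
    (hc : ∀ i ∈ d, c i ∈ Set.Ioo (0 : ℝ) 1) (hS : 1 < ∑ i ∈ d, c i) (x y : ℝ)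
    (hx : x ∈ Set.Ioo (0 : ℝ) 1) (hy : y ∈ Set.Ioo (0 : ℝ) 1)
    (ex : 1 - x = ∏ i ∈ d, (1 - c i * x)) (ey : 1 - y = ∏ i ∈ d, (1 - c i * y)) : ¬ x < y := by
  intro hlt
  obtain ⟨a, ha, hne⟩ := aux_two d c hc hS
  have h := aux_conv_strict d _ (aux_scale d c hc y hy) a ha hne (x / y) (div_pos hx.1 hy.1)
    ((div_lt_one hy.1).2 hlt)
  have hy0 : y ≠ 0 := hy.1.ne'
  have e : ∀ i, x / y * (c i * y) = c i * x := fun i => by field_simp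
  simp only [e] at h
  rw [← ex, ← ey] at h
  have : 1 - x / y + x / y * (1 - y) = 1 - x := by field_simp; ring
  linarith

lemma aux_exists {ι : Type*} [DecidableEq ι] (d : Finset ι) (c : ι → ℝ)
    (hc : ∀ i ∈ d, c i ∈ Set.Ioo (0 : ℝ) 1) (hS : 1 < ∑ i ∈ d, c i) :
    ∃ x ∈ Set.Ioo (0 : ℝ) 1, 1 - x = ∏ i ∈ d, (1 - c i * x) := by
  set S := ∑ i ∈ d, c i with hSdef
  have hS0 : 0 < S := by linarith
  have hx0 : (S - 1) / S ∈ Set.Ioo (0 : ℝ) 1 :=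
    ⟨div_pos (by linarith) hS0, (div_lt_one hS0).2 (by linarith)⟩
  have hps := aux_prod_sum d _ (aux_scale d c hc _ hx0)
  rw [← Finset.sum_mul, ← hSdef, mul_div_cancel₀ _ hS0.ne'] at hps
  have hx0' : 1 - (S - 1) / S = 1 / S := by field_simp; ring
  have hcont : ContinuousOn (fun x : ℝ => (1 - x) - ∏ i ∈ d, (1 - c i * x))
      (Set.Icc ((S - 1) / S) 1) := by fun_prop
  have h1 : 0 < ∏ i ∈ d, (1 - c i * 1) := by
    simpa using aux_prod_pos d c hc
  have hmem : (0 : ℝ) ∈ Set.Icc ((fun x : ℝ => (1 - x) - ∏ i ∈ d, (1 - c i * x)) 1)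
      ((fun x : ℝ => (1 - x) - ∏ i ∈ d, (1 - c i * x)) ((S - 1) / S)) := by
    refine ⟨by simp only; linarith, ?_⟩
    simp only
    rw [hx0', sub_nonneg, le_div_iff₀ hS0]
    rwa [add_sub_cancel] at hps
  obtain ⟨x, hx, he⟩ := intermediate_value_Icc' hx0.2.le hcont hmem
  simp only at he
  refine ⟨x, ⟨hx0.1.trans_le hx.1, lt_of_le_of_ne hx.2 ?_⟩, by linarith⟩
  rintro rfl
  linarith

lemma aux_deriv {ι : Type*} [DecidableEq ι] (d : Finset ι) (c : ι → ℝ)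
    (hc : ∀ i ∈ d, c i ∈ Set.Ioo (0 : ℝ) 1) (hS : 1 < ∑ i ∈ d, c i) (x : ℝ)
    (hx : x ∈ Set.Ioo (0 : ℝ) 1) (ex : 1 - x = ∏ i ∈ d, (1 - c i * x)) :
    ∃ D : ℝ, D ≠ 0 ∧ HasDerivAt (fun x : ℝ => (1 - x) - ∏ i ∈ d, (1 - c i * x)) D x := by
  obtain ⟨a, ha, hne⟩ := aux_two d c hc hS
  have hsc := aux_scale d c hc x hx
  have hb := aux_bern_strict d _ hsc a ha hne
  have h1 : HasDerivAt (fun x : ℝ => ∏ i ∈ d, (1 - c i * x))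
      (∑ i ∈ d, (∏ j ∈ d.erase i, (1 - c j * x)) • (-(c i))) x := by
    apply HasDerivAt.fun_finsetProd
    intro i hi
    simpa using ((hasDerivAt_id x).const_mul (c i)).const_sub 1
  refine ⟨_, ?_, ((hasDerivAt_id x).const_sub 1).sub h1⟩
  have e : (∑ i ∈ d, (∏ j ∈ d.erase i, (1 - c j * x)) • (-(c i))) * x
      = - ((∏ i ∈ d, (1 - c i * x)) * ∑ i ∈ d, c i * x / (1 - c i * x)) := by
    rw [Finset.sum_mul, Finset.mul_sum, ← Finset.sum_neg_distrib]
    refine Finset.sum_congr rfl fun i hi => ?_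
    rw [← Finset.mul_prod_erase d _ hi]
    have : 1 - c i * x ≠ 0 := by linarith [(hsc i hi).2]
    simp only [smul_eq_mul]
    generalize ∏ j ∈ d.erase i, (1 - c j * x) = Q
    have e2 : (1 - c i * x) * (c i * x / (1 - c i * x)) = c i * x := mul_div_cancel₀ _ this
    linear_combination Q * e2
  intro h0
  rw [sub_eq_zero] at h0
  rw [← h0] at e
  rw [mul_add, mul_one, ← ex] at hb
  rw [← ex] at e
  linarith

theorem root_continuously_differentiable {ι : Type*} [Fintype ι] [DecidableEq ι]
    (d : Finset ι) :
    ∃ φ : (ι → ℝ) → ℝ,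
      ContDiffOn ℝ 1 φ {c | (∀ i ∈ d, c i ∈ Set.Ioo (0 : ℝ) 1) ∧ 1 < ∑ i ∈ d, c i} ∧
      ∀ c ∈ {c : ι → ℝ | (∀ i ∈ d, c i ∈ Set.Ioo (0 : ℝ) 1) ∧ 1 < ∑ i ∈ d, c i},
        φ c ∈ Set.Ioo (0 : ℝ) 1 ∧ 1 - φ c = ∏ i ∈ d, (1 - c i * φ c) := by
  have hex : ∀ c : ι → ℝ, ∃ x : ℝ, ((∀ i ∈ d, c i ∈ Set.Ioo (0 : ℝ) 1) ∧ 1 < ∑ i ∈ d, c i) →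
      x ∈ Set.Ioo (0 : ℝ) 1 ∧ 1 - x = ∏ i ∈ d, (1 - c i * x) := by
    intro c
    by_cases h : (∀ i ∈ d, c i ∈ Set.Ioo (0 : ℝ) 1) ∧ 1 < ∑ i ∈ d, c i
    · obtain ⟨x, hx⟩ := aux_exists d c h.1 h.2
      exact ⟨x, fun _ => hx⟩
    · exact ⟨0, fun h' => absurd h' h⟩
  choose φ hφ using hex
  refine ⟨φ, ?_, fun c hc => hφ c hc⟩
  intro c hc
  obtain ⟨hx, ex⟩ := hφ c hc
  let f : (ι → ℝ) × ℝ → ℝ := fun p => (1 - p.2) - ∏ i ∈ d, (1 - p.1 i * p.2)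
  have cdf : ContDiffAt ℝ 1 f (c, φ c) := by
    apply ContDiff.contDiffAt
    refine (contDiff_const.sub contDiff_snd).sub (contDiff_prod fun i _ => ?_)
    fun_prop
  obtain ⟨D, hD, hder⟩ := aux_deriv d c hc.1 hc.2 _ hx ex
  have hF : HasFDerivAt f (fderiv ℝ f (c, φ c)) (c, φ c) :=
    (cdf.differentiableAt one_ne_zero).hasFDerivAt
  have hcomp : HasFDerivAt (fun x : ℝ => f (c, x))
      (fderiv ℝ f (c, φ c) ∘L .inr ℝ (ι → ℝ) ℝ) (φ c) :=
    HasFDerivAt.comp (φ c) hF (hasFDerivAt_prodMk_right c (φ c))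
  have heq := hcomp.unique hder.hasFDerivAt
  have if₂ : (fderiv ℝ f (c, φ c) ∘L .inr ℝ (ι → ℝ) ℝ).IsInvertible := by
    rw [heq]
    refine ⟨ContinuousLinearEquiv.unitsEquivAut ℝ (Units.mk0 D hD), ?_⟩
    ext
    simp
  have hf0 : f (c, φ c) = 0 := by simp only [f]; linarith
  have hψ := cdf.contDiffAt_implicitFunction one_ne_zero if₂
  have hself := cdf.implicitFunction_apply_self one_ne_zero if₂
  have hev := cdf.eventually_apply_implicitFunction one_ne_zero if₂
  set ψ := cdf.implicitFunction one_ne_zero if₂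
  simp only at hψ hself hev
  have hIoo : ∀ᶠ x in nhds c, ψ x ∈ Set.Ioo (0 : ℝ) 1 := by
    apply hψ.continuousAt.eventually
    rw [hself]
    exact Ioo_mem_nhds hx.1 hx.2
  refine hψ.contDiffWithinAt.congr_of_eventuallyEq ?_ hself.symm
  filter_upwards [self_mem_nhdsWithin, mem_nhdsWithin_of_mem_nhds hev,
    mem_nhdsWithin_of_mem_nhds hIoo] with b hb h1 h2
  obtain ⟨h3, h4⟩ := hφ b hb
  have h1' : f (b, ψ b) = 0 := h1.trans hf0
  have h5 : 1 - ψ b = ∏ i ∈ d, (1 - b i * ψ b) := by simp only [f] at h1'; linarith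
  exact le_antisymm (not_lt.1 (aux_not_lt d b hb.1 hb.2 _ _ h2 h3 h5 h4))
    (not_lt.1 (aux_not_lt d b hb.1 hb.2 _ _ h3 h2 h4 h5))
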